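/- For every p ∈ ℕ one has E[|w + Z|^{2p}] = ∑_{ℓ=0}^{p} [(2p−2+ν)!! / (2(p−ℓ)−2+ν)!!] · (p choose ℓ) · |w|^{2(p−ℓ)} σ^{2ℓ}, where |·| denotes the Euclidean norm on ℝ^ν. -/

import Mathlib

open MeasureTheory ProbabilityTheory

/-- Double factorial with integer argument, using the conventions
`(2j)‼ = 2^j j!`, `(2j+1)‼ = (2j+1)!/(2j)‼` for `j ∈ ℕ₀` and `(−1)‼ = 1`. -/
noncomputable def dfacZ (n : ℤ) : ℝ :=
  if n < 0 then 1 else (Nat.doubleFactorial n.toNat : ℝ)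


structure MRec (a t s : ℝ) (M : ℕ → ℝ) : Prop where
  zero : M 0 = 1
  succ : ∀ p : ℕ, M (p + 1) = ((4 * p + a) * t + s) * M p
    - 2 * p * (2 * p - 2 + a) * t ^ 2 * M (p - 1)

lemma MRec.unique {a t s : ℝ} {M N : ℕ → ℝ} (hM : MRec a t s M) (hN : MRec a t s N) (p : ℕ) :
    M p = N p := by
  induction p using Nat.strong_induction_on with
  | _ p ih =>
    cases p with
    | zero => rw [hM.zero, hN.zero]
    | succ p => rw [hM.succ, hN.succ, ih p (by omega), ih (p - 1) (by omega)]

noncomputable def egf (M : ℕ → ℝ) : PowerSeries ℝ := PowerSeries.mk fun n => M n / n.factorial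

lemma coeff_X_mul_deriv (G : PowerSeries ℝ) (n : ℕ) :
    PowerSeries.coeff n (PowerSeries.X * PowerSeries.derivative ℝ G) = n * PowerSeries.coeff n G := by
  cases n with
  | zero => simp
  | succ n => rw [PowerSeries.coeff_succ_X_mul, PowerSeries.coeff_derivative]; push_cast; ring

lemma mrec_iff (a t s : ℝ) (M : ℕ → ℝ) : MRec a t s M ↔ M 0 = 1 ∧
    PowerSeries.derivative ℝ (egf M)
      - PowerSeries.C (4 * t) * (PowerSeries.X * PowerSeries.derivative ℝ (egf M))
      + PowerSeries.C (4 * t ^ 2) * (PowerSeries.X * (PowerSeries.X * PowerSeries.derivative ℝ (egf M)))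
    = PowerSeries.C (a * t + s) * egf M - PowerSeries.C (2 * a * t ^ 2) * (PowerSeries.X * egf M) := by
  have key : ∀ p : ℕ, (M (p + 1) = ((4 * p + a) * t + s) * M p
      - 2 * p * (2 * p - 2 + a) * t ^ 2 * M (p - 1)) ↔
      PowerSeries.coeff p (PowerSeries.derivative ℝ (egf M)
      - PowerSeries.C (4 * t) * (PowerSeries.X * PowerSeries.derivative ℝ (egf M))
      + PowerSeries.C (4 * t ^ 2) * (PowerSeries.X * (PowerSeries.X * PowerSeries.derivative ℝ (egf M))))
    = PowerSeries.coeff p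
      (PowerSeries.C (a * t + s) * egf M - PowerSeries.C (2 * a * t ^ 2) * (PowerSeries.X * egf M)) := by
    intro p
    simp only [map_add, map_sub, add_mul, PowerSeries.coeff_C_mul, coeff_X_mul_deriv,
      PowerSeries.coeff_derivative]
    cases p with
    | zero => simp [egf]
    | succ p =>
      simp only [PowerSeries.coeff_succ_X_mul, coeff_X_mul_deriv, egf, PowerSeries.coeff_mk,
        Nat.factorial_succ, Nat.add_sub_cancel]
      have : (p.factorial : ℝ) ≠ 0 := by positivity
      push_cast
      have h1 : (p : ℝ) + 1 ≠ 0 := by positivity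
      have h2 : (p : ℝ) + 1 + 1 ≠ 0 := by positivity
      field_simp
      constructor <;> intro h <;> linear_combination h
  constructor
  · rintro ⟨h0, h⟩
    exact ⟨h0, PowerSeries.ext fun p => (key p).1 (h p)⟩
  · rintro ⟨h0, h⟩
    exact ⟨h0, fun p => (key p).2 (by rw [h])⟩

noncomputable def conv (M N : ℕ → ℝ) (p : ℕ) : ℝ :=
  ∑ k ∈ Finset.range (p + 1), M k * N (p - k) * (p.choose k : ℝ)

lemma egf_conv (M N : ℕ → ℝ) : egf (conv M N) = egf M * egf N := by
  ext p
  rw [PowerSeries.coeff_mul, Finset.Nat.sum_antidiagonal_eq_sum_range_succ_mk]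
  simp only [egf, PowerSeries.coeff_mk, conv, Finset.sum_div]
  refine Finset.sum_congr rfl fun k hk => ?_
  have hk : k ≤ p := by simpa [Nat.lt_succ_iff] using hk
  rw [Nat.cast_choose ℝ hk]
  have h1 : (p.factorial : ℝ) ≠ 0 := by positivity
  have h2 : (k.factorial : ℝ) ≠ 0 := by positivity
  have h3 : ((p - k).factorial : ℝ) ≠ 0 := by positivity
  field_simp

lemma MRec.conv {a b t s u : ℝ} {M N : ℕ → ℝ} (hM : MRec a t s M) (hN : MRec b t u N) :
    MRec (a + b) t (s + u) (conv M N) := by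
  rw [mrec_iff] at *
  refine ⟨by simp [_root_.conv, hM.1, hN.1], ?_⟩
  rw [egf_conv, Derivation.leibniz]
  simp only [smul_eq_mul, map_add, map_mul, map_ofNat, map_pow] at *
  linear_combination (egf N) * hM.2 + (egf M) * hN.2

lemma mrec_base (t : ℝ) : MRec 0 t 0 (fun p => (0 : ℝ) ^ p) := by
  refine ⟨by simp, fun p => ?_⟩
  rcases p with _ | _ | p <;> simp

/-- binomial transform -/
noncomputable def bt (t : ℝ) (p : ℕ) (a : ℕ → ℝ) : ℝ :=
  ∑ k ∈ Finset.range (p + 1), (p.choose k : ℝ) * t ^ (p - k) * a k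

lemma bt_succ (t : ℝ) (p : ℕ) (a : ℕ → ℝ) :
    bt t (p + 1) a = t * bt t p a + bt t p (fun k => a (k + 1)) := by
  have h : t * bt t p a = ∑ k ∈ Finset.range (p + 1 + 1), (p.choose k : ℝ) * t ^ (p + 1 - k) * a k := by
    rw [Finset.sum_range_succ, Nat.choose_succ_self]
    simp only [bt, Finset.mul_sum, Nat.cast_zero, zero_mul, add_zero]
    refine Finset.sum_congr rfl fun k hk => ?_
    have hk : k ≤ p := by simpa [Nat.lt_succ_iff] using hk
    rw [Nat.succ_sub hk, pow_succ]; ring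
  rw [h]
  unfold bt
  rw [Finset.sum_range_succ', Finset.sum_range_succ' _ (p + 1)]
  simp only [Nat.choose_succ_succ, Nat.add_sub_add_right, Nat.cast_add, add_mul,
    Finset.sum_add_distrib, Nat.choose_zero_right]
  ring

lemma bt_mul (t : ℝ) (p : ℕ) (a : ℕ → ℝ) :
    bt t (p + 1) (fun k => k * a k) = (p + 1) * bt t p (fun k => a (k + 1)) := by
  unfold bt
  rw [Finset.sum_range_succ', Finset.mul_sum]
  simp only [Nat.cast_zero, zero_mul, mul_zero, add_zero, Nat.add_sub_add_right]
  refine Finset.sum_congr rfl fun k hk => ?_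
  have : ((p : ℝ) + 1) * (p.choose k : ℝ) = (p + 1).choose (k + 1) * (k + 1) := by
    exact_mod_cast Nat.add_one_mul_choose_eq p k
  push_cast
  linear_combination (-t ^ (p - k) * a (k+1)) * this

noncomputable def DD (a : ℝ) (p : ℕ) : ℝ := ∏ j ∈ Finset.range p, (2 * (j : ℝ) + a)

lemma DD_pos {a : ℝ} (ha : 0 < a) (p : ℕ) : 0 < DD a p :=
  Finset.prod_pos fun j _ => by positivity

lemma DD_succ (a : ℝ) (p : ℕ) : DD a (p + 1) = DD a p * (2 * p + a) :=
  Finset.prod_range_succ _ _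

lemma mrec_closed {a : ℝ} (ha : 0 < a) (t s : ℝ) :
    MRec a t s (fun p => DD a p * bt t p (fun k => s ^ k / DD a k)) := by
  refine ⟨by simp [DD, bt], fun p => ?_⟩
  set A : ℕ → ℝ := fun k => s ^ k / DD a k with hA
  have hs : ∀ k, s * A k = (2 * k + a) * A (k + 1) := by
    intro k
    have := (DD_pos ha k).ne'
    have h2 : 2 * (k : ℝ) + a ≠ 0 := by positivity
    simp only [hA, DD_succ]
    field_simp
    ring
  have h1 : s * bt t p A = a * bt t p (fun k => A (k + 1)) +
      2 * bt t p (fun k => k * A (k + 1)) := by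
    unfold bt
    simp only [Finset.mul_sum]
    rw [← Finset.sum_add_distrib]
    refine Finset.sum_congr rfl fun k _ => ?_
    linear_combination ((p.choose k : ℝ) * t ^ (p - k)) * hs k
  have h2 := bt_succ t p A
  cases p with
  | zero =>
    have h3 : bt t 0 (fun k => (k : ℝ) * A (k + 1)) = 0 := by simp [bt]
    rw [h3] at h1
    simp only [DD_succ] at *
    push_cast at *
    linear_combination (DD a 0 * a) * h2 - DD a 0 * h1
  | succ p =>
    rw [bt_mul t p (fun k => A (k + 1))] at h1
    have h3 := bt_succ t p A
    have h4 := bt_succ t p (fun k => A (k + 1))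
    simp only [DD_succ, Nat.add_sub_cancel] at *
    push_cast at *
    generalize bt t (p + 1 + 1) A = x2 at *
    generalize bt t (p + 1) A = x1 at *
    generalize bt t p A = x0 at *
    generalize bt t p (fun k => A (k + 1)) = y0 at *
    generalize bt t (p + 1) (fun k => A (k + 1)) = y1 at *
    generalize bt t p (fun k => A (k + 1 + 1)) = z0 at *
    have hz : z0 = y1 - t * y0 := by linarith
    have hy0 : y0 = x1 - t * x0 := by linarith
    have hy1 : y1 = x2 - t * x1 := by linarith
    subst hz hy0 hy1
    linear_combination -(DD a p * (2 * p + a)) * h1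

lemma integrable_shift (v : NNReal) (w : ℝ) (n : ℕ) :
    Integrable (fun x : ℝ => (w + x) ^ n) (gaussianReal 0 v) := by
  have h : MemLp (fun x : ℝ => w + x) n (gaussianReal 0 v) :=
    (memLp_const w).add (memLp_id_gaussianReal' _ (by simp))
  have := h.integrable_norm_pow'
  refine (integrable_norm_iff (by fun_prop)).1 ?_
  simpa using this

lemma stein (v : NNReal) (hv : v ≠ 0) (w : ℝ) (n : ℕ) :
    ∫ x, (w + x) ^ (n + 1) ∂(gaussianReal 0 v) = w * ∫ x, (w + x) ^ n ∂(gaussianReal 0 v)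
      + n * v * ∫ x, (w + x) ^ (n - 1) ∂(gaussianReal 0 v) := by
  have hv' : (v : ℝ) ≠ 0 := by exact_mod_cast hv
  have hi : ∀ m : ℕ, Integrable (fun x : ℝ => gaussianPDFReal 0 v x * (w + x) ^ m) := by
    intro m
    have := integrable_shift v w m
    rw [gaussianReal_of_var_ne_zero _ hv, integrable_withDensity_iff_integrable_smul₀'
      (by fun_prop) (by simp [gaussianPDF_lt_top])] at this
    simpa using this
  have hd : ∀ x, HasDerivAt (fun x : ℝ => gaussianPDFReal 0 v x * (w + x) ^ n)
      ((n : ℝ) * (gaussianPDFReal 0 v x * (w + x) ^ (n - 1))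
        + (w / v) * (gaussianPDFReal 0 v x * (w + x) ^ n)
        - (1 / v) * (gaussianPDFReal 0 v x * (w + x) ^ (n + 1))) x := by
    intro x
    have h1 : HasDerivAt (gaussianPDFReal 0 v) (gaussianPDFReal 0 v x * (- x / v)) x := by
      unfold gaussianPDFReal
      have : HasDerivAt (fun x : ℝ => -(x - 0) ^ 2 / (2 * (v : ℝ))) (- x / v) x := by
        refine HasDerivAt.congr_deriv
          ((((hasDerivAt_id x).sub_const 0).pow 2).neg.div_const (2 * (v : ℝ))) ?_
        simp
        field_simp
      refine HasDerivAt.congr_deriv (this.exp.const_mul _) ?_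
      ring
    have h2 : HasDerivAt (fun x : ℝ => (w + x) ^ n) (n * (w + x) ^ (n - 1)) x := by
      exact HasDerivAt.congr_deriv (((hasDerivAt_id x).const_add w).pow n) (by simp)
    refine HasDerivAt.congr_deriv (h1.mul h2) ?_
    field_simp
    ring
  have h0 := integral_eq_zero_of_hasDerivAt_of_integrable hd
    ((((hi _).const_mul _).add ((hi _).const_mul _)).sub ((hi _).const_mul _)) (hi n)
  rw [integral_sub ?_ ((hi _).const_mul _),
    integral_add ((hi _).const_mul _) ((hi _).const_mul _), integral_const_mul,
    integral_const_mul, integral_const_mul] at h0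
  swap
  · exact ((hi _).const_mul _).add ((hi _).const_mul _)
  simp only [integral_gaussianReal_eq_integral_smul hv, smul_eq_mul]
  field_simp at h0
  linear_combination -h0

lemma mrec_one (v : NNReal) (hv : v ≠ 0) (w : ℝ) :
    MRec 1 v (w ^ 2) (fun p => ∫ x, ((w + x) ^ 2) ^ p ∂(gaussianReal 0 v)) := by
  refine ⟨by simp, fun p => ?_⟩
  simp only [← pow_mul]
  have h1 := stein v hv w (2 * p + 1)
  have h2 := stein v hv w (2 * p)
  cases p with
  | zero =>
    simp at *
    linear_combination h1 + w * h2
  | succ p =>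
    have h3 := stein v hv w (2 * p + 1)
    simp only [Nat.add_sub_cancel, show 2 * (p + 1) - 1 = 2 * p + 1 by omega,
      show 2 * (p + 1) = 2 * p + 1 + 1 by omega, show 2 * (p + 1 + 1) = 2 * p + 1 + 1 + 1 + 1 by omega] at *
    push_cast at *
    linear_combination h1 + w * h2 - (2 * p + 2) * v * h3

lemma pi_moments (v : NNReal) (hv : v ≠ 0) (n : ℕ) (w : Fin n → ℝ) :
    (∀ p, Integrable (fun z : Fin n → ℝ => (∑ i, (w i + z i) ^ 2) ^ p)
      (Measure.pi fun _ : Fin n => gaussianReal 0 v)) ∧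
    MRec n v (∑ i, w i ^ 2) (fun p => ∫ z, (∑ i, (w i + z i) ^ 2) ^ p
      ∂(Measure.pi fun _ : Fin n => gaussianReal 0 v)) := by
  induction n with
  | zero =>
    refine ⟨fun p => by simp, ?_⟩
    simpa using mrec_base v
  | succ n ih =>
    obtain ⟨ih1, ih2⟩ := ih (fun i => w i.succ)
    have hmp := (measurePreserving_piFinSuccAbove (fun _ : Fin (n + 1) => gaussianReal 0 v) 0).symm
    have hterm : ∀ p k : ℕ, Integrable (fun z : ℝ × (Fin n → ℝ) =>
        ((w 0 + z.1) ^ 2) ^ k * (∑ i, (w (Fin.succ i) + z.2 i) ^ 2) ^ (p - k) * (p.choose k : ℝ))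
        ((gaussianReal 0 v).prod (Measure.pi fun _ : Fin n => gaussianReal 0 v)) := by
      intro p k
      refine Integrable.mul_const ?_ _
      refine Integrable.mul_prod (f := fun x : ℝ => ((w 0 + x) ^ 2) ^ k) ?_ (ih1 (p - k))
      simpa only [← pow_mul] using integrable_shift v (w 0) (2 * k)
    have hcomp : ∀ p : ℕ, (fun z : Fin (n + 1) → ℝ => (∑ i, (w i + z i) ^ 2) ^ p) ∘
        (MeasurableEquiv.piFinSuccAbove (fun _ : Fin (n + 1) => ℝ) 0).symm =
        fun z : ℝ × (Fin n → ℝ) => ∑ k ∈ Finset.range (p + 1),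
        ((w 0 + z.1) ^ 2) ^ k * (∑ i, (w (Fin.succ i) + z.2 i) ^ 2) ^ (p - k) * (p.choose k : ℝ) := by
      intro p
      ext z
      rw [← add_pow]
      simp [Fin.sum_univ_succ, MeasurableEquiv.piFinSuccAbove_symm_apply, Fin.insertNthEquiv]
    refine ⟨fun p => ?_, ?_⟩
    · rw [← hmp.integrable_comp_emb (MeasurableEquiv.measurableEmbedding _), hcomp]
      exact integrable_finsetSum _ fun k _ => hterm p k
    · have := (mrec_one v hv (w 0)).conv ih2
      rw [Fin.sum_univ_succ]
      convert this using 1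
      · push_cast; ring
      · ext p
        rw [← hmp.integral_comp']
        have e := hcomp p
        simp only [Function.comp_def] at e
        rw [e, integral_finsetSum _ fun k _ => hterm p k]
        refine Finset.sum_congr rfl fun k _ => ?_
        rw [integral_mul_const]
        congr 1
        exact integral_prod_mul (fun x : ℝ => ((w 0 + x) ^ 2) ^ k)
          (fun z : Fin n → ℝ => (∑ i, (w (Fin.succ i) + z i) ^ 2) ^ (p - k))

lemma dfac_eq (ν : ℕ) (hν : 0 < ν) (p : ℕ) :
    dfacZ (2 * (p : ℤ) - 2 + (ν : ℤ)) = dfacZ ((ν : ℤ) - 2) * DD ν p := by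
  induction p with
  | zero => simp [DD, sub_eq_neg_add]
  | succ p ih =>
    rw [DD_succ, ← mul_assoc, ← ih]
    unfold dfacZ
    rw [if_neg (by push_cast; omega),
      show (2 * ((p + 1 : ℕ) : ℤ) - 2 + (ν : ℤ)).toNat = 2 * p + ν by push_cast; omega]
    split_ifs with h
    · have h1 : p = 0 := by omega
      have h2 : ν = 1 := by omega
      subst h1 h2
      simp
    · obtain ⟨m, hm⟩ : ∃ m, 2 * p + ν = m + 2 := ⟨2 * p + ν - 2, by omega⟩
      rw [show (2 * (p : ℤ) - 2 + (ν : ℤ)).toNat = m by omega, hm, Nat.doubleFactorial_add_two]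
      have : (2 * (p : ℝ) + ν) = m + 2 := by exact_mod_cast hm
      rw [this]; push_cast; ring

lemma dfacZ_pos (n : ℤ) : 0 < dfacZ n := by
  unfold dfacZ
  split_ifs
  · exact one_pos
  · exact_mod_cast Nat.doubleFactorial_pos _

/-- If `Z` is an `ℝ^ν`-valued random vector whose `ν` components are
independent centered Gaussians of variance `σ²` (i.e. `Z` has law `N(0, σ²·Id)`), then for
every `p ∈ ℕ`, `E[|w + Z|^{2p}] = ∑_{ℓ=0}^{p} ((2p−2+ν)‼/(2(p−ℓ)−2+ν)‼) (p choose ℓ)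
|w|^{2(p−ℓ)} σ^{2ℓ}`, with `|·|` the Euclidean norm (so `|w+Z|^{2p} = (∑ᵢ (wᵢ+Zᵢ)²)^p`). -/
theorem statement7 {Ω : Type*} [MeasurableSpace Ω] (P : Measure Ω) [IsProbabilityMeasure P]
    (ν : ℕ) (hν : 0 < ν) (σ : NNReal) (hσ : 0 < σ) (w : Fin ν → ℝ)
    (Z : Ω → Fin ν → ℝ) (hZmeas : Measurable Z)
    (hZlaw : Measure.map Z P = Measure.pi fun _ : Fin ν => gaussianReal 0 (σ ^ 2))
    (p : ℕ) (hp : 0 < p) :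
    ∫ ω, (∑ i, (w i + Z ω i) ^ 2) ^ p ∂P =
      ∑ ℓ ∈ Finset.range (p + 1),
        (dfacZ (2 * (p : ℤ) - 2 + (ν : ℤ)) / dfacZ (2 * ((p : ℤ) - (ℓ : ℤ)) - 2 + (ν : ℤ))) *
          (p.choose ℓ : ℝ) * (∑ i, w i ^ 2) ^ (p - ℓ) * (σ : ℝ) ^ (2 * ℓ) := by
  have hv : σ ^ 2 ≠ 0 := (pow_pos hσ 2).ne'
  have hm := (pi_moments (σ ^ 2) hv ν w).2
  have ha : (0 : ℝ) < ν := by exact_mod_cast hν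
  have hc := hm.unique (mrec_closed ha _ _) p
  have h1 : ∫ ω, (∑ i, (w i + Z ω i) ^ 2) ^ p ∂P = ∫ z, (∑ i, (w i + z i) ^ 2) ^ p
      ∂(Measure.pi fun _ : Fin ν => gaussianReal 0 (σ ^ 2)) := by
    rw [← hZlaw, integral_map hZmeas.aemeasurable (by
      refine Measurable.aestronglyMeasurable ?_
      exact (Finset.measurable_sum _ fun i _ =>
        (measurable_const.add (measurable_pi_apply i)).pow_const 2).pow_const p)]
  rw [h1]
  refine hc.trans ?_
  rw [bt, ← Finset.sum_range_reflect, Finset.mul_sum]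
  refine Finset.sum_congr rfl fun l hl => ?_
  have hl : l ≤ p := by simpa [Nat.lt_succ_iff] using hl
  have e1 : p + 1 - 1 - l = p - l := by omega
  have e2 : p - (p - l) = l := by omega
  have e3 : (p : ℤ) - (l : ℤ) = ((p - l : ℕ) : ℤ) := by omega
  rw [e1, e2, e3, dfac_eq ν hν, dfac_eq ν hν, Nat.choose_symm hl]
  have d1 := (dfacZ_pos ((ν : ℤ) - 2)).ne'
  have d2 := (DD_pos ha (p - l)).ne'
  push_cast
  rw [pow_mul]
  field_simp
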